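/- (Malmsten/Binet formula) For Re s > 0, log Γ(s) = ∫₀^∞ [ (s−1) e^{-t} − (e^{-t} − e^{-s t})/(1 − e^{-t}) ] · (dt/t). -/

import Mathlib

open MeasureTheory

/-!
Write `K s t` for the integrand. It vanishes at `s = 1`, and its `s`-derivative, Gauss's integrand
for the digamma function, is `O(exp (-c t))` locally uniformly on `c ≤ re s` for every `c ≤ 1`.
The mean value inequality carries this bound over to `K`, so `∫ K s` converges and is holomorphic
on the right half-plane.

On the positive reals `∫ K x` is convex in `x`, because `K x t` is affine in `x` plus a positive
multiple of `exp (-x t)`, and it satisfies the functional equation of `log Γ`, because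
`K (x + 1) t - K x t` is the Frullani integrand of `log x`. Hence it is `log Γ` by the
Bohr–Mollerup theorem, and the identity theorem extends the equality to the half-plane.
-/

open Set Filter Topology

theorem eqOn_re_pos_of_forall_ofReal {E : Type*} [NormedAddCommGroup E] [NormedSpace ℂ E]
    [CompleteSpace E] {f g : ℂ → E} (hf : DifferentiableOn ℂ f {z | 0 < z.re})
    (hg : DifferentiableOn ℂ g {z | 0 < z.re}) (hfg : ∀ x : ℝ, 0 < x → f x = g x) :
    EqOn f g {z | 0 < z.re} := by
  have hofReal : Tendsto ((↑) : ℝ → ℂ) (𝓝[≠] 1) (𝓝[≠] 1) :=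
    tendsto_nhdsWithin_iff.2
      ⟨(Complex.continuous_ofReal.tendsto' 1 1 Complex.ofReal_one).mono_left nhdsWithin_le_nhds,
        eventually_mem_nhdsWithin.mono fun x hx => Complex.ofReal_ne_one.2 hx⟩
  have heq : ∀ᶠ x : ℝ in 𝓝[≠] 1, f x = g x :=
    eventually_nhdsWithin_of_eventually_nhds ((eventually_gt_nhds one_pos).mono hfg)
  exact (hf.analyticOnNhd (Complex.isOpen_re_gt 0)).eqOn_of_preconnected_of_frequently_eq
    (hg.analyticOnNhd (Complex.isOpen_re_gt 0)) (convex_halfSpace_re_gt 0).isPreconnected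
    (z₀ := 1) (by simp) (hofReal.frequently heq.frequently)

theorem eq_ofReal_log_of_cexp_eq {w : ℂ} {y : ℝ} (him : w.im = 0) (hexp : Complex.exp w = y) :
    w = Real.log y := by
  have hw : w = (w.re : ℂ) := Complex.ext rfl him
  have hy : Real.exp w.re = y := by
    rw [hw, ← Complex.ofReal_exp] at hexp
    exact Complex.ofReal_injective hexp
  rw [← hy, Real.log_exp, ← hw]

theorem convexOn_integral {α E : Type*} [MeasurableSpace α] {μ : Measure α} [AddCommMonoid E]
    [SMul ℝ E] {s : Set E} {f : E → α → ℝ} (hs : Convex ℝ s)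
    (hf : ∀ᵐ a ∂μ, ConvexOn ℝ s (f · a)) (hint : ∀ x ∈ s, Integrable (f x) μ) :
    ConvexOn ℝ s fun x => ∫ a, f x a ∂μ := by
  refine ⟨hs, fun x hx y hy a b ha hb hab => ?_⟩
  have hax : Integrable (fun t => a • f x t) μ := (hint x hx).smul a
  have hby : Integrable (fun t => b • f y t) μ := (hint y hy).smul b
  calc ∫ t, f (a • x + b • y) t ∂μ
      ≤ ∫ t, (a • f x t + b • f y t) ∂μ :=
        integral_mono_ae (hint _ (hs hx hy ha hb hab)) (hax.add hby)
          (hf.mono fun t ht => ht.2 hx hy ha hb hab)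
    _ = a • ∫ t, f x t ∂μ + b • ∫ t, f y t ∂μ := by
        rw [integral_add hax hby, integral_smul, integral_smul]

section ExponentialBounds

variable {c t : ℝ} {z w : ℂ}

theorem one_sub_exp_neg_pos (ht : 0 < t) : 0 < 1 - Real.exp (-t) :=
  sub_pos.2 (Real.exp_lt_one_iff.2 (neg_neg_of_pos ht))

theorem abs_inv_sub_inv_one_sub_exp_neg_le_one (ht : 0 < t) :
    |t⁻¹ - (1 - Real.exp (-t))⁻¹| ≤ 1 := by
  have hpos := one_sub_exp_neg_pos ht
  have hlower : t⁻¹ ≤ (1 - Real.exp (-t))⁻¹ :=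
    inv_anti₀ hpos (by linarith [Real.add_one_le_exp (-t)])
  have hupper : (1 - Real.exp (-t))⁻¹ ≤ t⁻¹ + 1 := by
    have hexp : (1 + t) * Real.exp (-t) ≤ 1 := by
      rw [Real.exp_neg, ← div_eq_mul_inv, div_le_one (Real.exp_pos t), add_comm]
      exact Real.add_one_le_exp t
    rw [inv_le_iff_one_le_mul₀ hpos]
    field_simp
    linarith
  rw [abs_le]
  constructor <;> linarith

theorem norm_cexp_neg_mul_le (ht : 0 ≤ t) (hz : c ≤ z.re) :
    ‖Complex.exp (-z * t)‖ ≤ Real.exp (-c * t) := by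
  rw [Complex.norm_exp, Complex.re_mul_ofReal, Complex.neg_re]
  gcongr

theorem hasDerivAt_cexp_neg_mul (z : ℂ) (t : ℝ) :
    HasDerivAt (fun w : ℂ => Complex.exp (-w * t)) (-(t * Complex.exp (-z * t))) z := by
  refine ((hasDerivAt_neg z).mul_const (t : ℂ)).cexp.congr_deriv ?_
  ring

theorem norm_cexp_neg_mul_sub_le (ht : 0 ≤ t) (hz : c ≤ z.re) (hw : c ≤ w.re) :
    ‖Complex.exp (-z * t) - Complex.exp (-w * t)‖ ≤ t * Real.exp (-c * t) * ‖z - w‖ := by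
  refine (convex_halfSpace_re_ge c).norm_image_sub_le_of_norm_hasDerivWithin_le
    (fun v _ => (hasDerivAt_cexp_neg_mul v t).hasDerivWithinAt) (fun v hv => ?_) hw hz
  rw [norm_neg, norm_mul, Complex.norm_of_nonneg ht]
  gcongr
  exact norm_cexp_neg_mul_le ht hv

end ExponentialBounds

section Frullani

variable {a b : ℝ}

theorem integrableOn_exp_neg_mul_sub_div (ha : 0 < a) (hb : 0 < b) :
    IntegrableOn (fun t => (Real.exp (-a * t) - Real.exp (-b * t)) / t) (Ioi 0) := by
  refine Integrable.mono' ((exp_neg_integrableOn_Ioi 0 (lt_min ha hb)).const_mul |a - b|)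
    (Measurable.aestronglyMeasurable (by fun_prop))
    (ae_restrict_of_forall_mem measurableSet_Ioi fun t ht => ?_)
  replace ht : 0 < t := ht
  have hbound : |Real.exp (-a * t) - Real.exp (-b * t)|
      ≤ t * Real.exp (-min a b * t) * |a - b| := by
    have := norm_cexp_neg_mul_sub_le (z := a) (w := b) ht.le (min_le_left a b)
      (min_le_right a b)
    exact_mod_cast this
  rw [Real.norm_eq_abs, abs_div, abs_of_pos ht, div_le_iff₀ ht]
  linarith

theorem integral_exp_neg_mul_sub_div (ha : 0 < a) (hb : 0 < b) :
    ∫ t in Ioi (0 : ℝ), (Real.exp (-a * t) - Real.exp (-b * t)) / t = Real.log (b / a) := by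
  have hcont : Continuous fun u : ℝ => Real.exp (-u) := by fun_prop
  have hzero : Tendsto (fun u : ℝ => Real.exp (-u)) (𝓝[>] 0) (𝓝 1) :=
    (hcont.tendsto' 0 1 (by simp)).mono_left nhdsWithin_le_nhds
  have hfrullani := Frullani.integral_Ioi_eq (hcont.locallyIntegrable.locallyIntegrableOn _)
    ha hb hzero Real.tendsto_exp_neg_atTop_nhds_zero
  simp only [smul_eq_mul, inv_mul_eq_div, ← neg_mul, sub_zero, mul_one] at hfrullani
  exact hfrullani (integrableOn_exp_neg_mul_sub_div ha hb)

end Frullani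

section Holomorphy

/-- The integrand of Malmsten's formula for `log Γ(s)`. -/
noncomputable def malmstenIntegrand (s : ℂ) (t : ℝ) : ℂ :=
  ((s - 1) * Complex.exp (-t) -
    (Complex.exp (-t) - Complex.exp (-s * t)) / (1 - Complex.exp (-t))) / t

/-- The integrand of Gauss's formula for the digamma function `Γ'/Γ`, which is the derivative of
`malmstenIntegrand` in `s`. -/
noncomputable def gaussIntegrand (s : ℂ) (t : ℝ) : ℂ :=
  Complex.exp (-t) / t - Complex.exp (-s * t) / (1 - Complex.exp (-t))

variable {c t : ℝ} {s : ℂ}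

@[fun_prop]
theorem measurable_malmstenIntegrand (s : ℂ) : Measurable (malmstenIntegrand s) := by
  unfold malmstenIntegrand
  fun_prop

@[fun_prop]
theorem measurable_gaussIntegrand (s : ℂ) : Measurable (gaussIntegrand s) := by
  unfold gaussIntegrand
  fun_prop

theorem malmstenIntegrand_one (t : ℝ) : malmstenIntegrand 1 t = 0 := by
  simp [malmstenIntegrand]

theorem hasDerivAt_malmstenIntegrand (s : ℂ) (ht : t ≠ 0) :
    HasDerivAt (malmstenIntegrand · t) (gaussIntegrand s t) s := by
  have hlin : HasDerivAt (fun z : ℂ => (z - 1) * Complex.exp (-t)) (Complex.exp (-t)) s := by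
    simpa using ((hasDerivAt_id s).sub_const 1).mul_const (Complex.exp (-t))
  have hquot := ((hasDerivAt_cexp_neg_mul s t).const_sub (Complex.exp (-t))).div_const
    (1 - Complex.exp (-t))
  refine ((hlin.sub hquot).div_const (t : ℂ)).congr_deriv ?_
  have htC : (t : ℂ) ≠ 0 := Complex.ofReal_ne_zero.2 ht
  rw [gaussIntegrand, neg_neg, sub_div, mul_div_assoc, mul_div_cancel_left₀ _ htC]

-- Unlike the two terms of the definition, both summands here stay bounded as `t → 0`.
theorem gaussIntegrand_eq_div_add_mul (s : ℂ) (t : ℝ) :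
    gaussIntegrand s t = (Complex.exp (-t) - Complex.exp (-s * t)) / t +
      Complex.exp (-s * t) * ((t⁻¹ - (1 - Real.exp (-t))⁻¹ : ℝ) : ℂ) := by
  push_cast
  rw [gaussIntegrand]
  ring

theorem norm_gaussIntegrand_le (ht : 0 < t) (hc : c ≤ 1) (hs : c ≤ s.re) :
    ‖gaussIntegrand s t‖ ≤ (‖s - 1‖ + 1) * Real.exp (-c * t) := by
  have hdiff : ‖(Complex.exp (-t) - Complex.exp (-s * t)) / t‖ ≤ ‖s - 1‖ * Real.exp (-c * t) := by
    rw [norm_div, Complex.norm_of_nonneg ht.le, div_le_iff₀ ht, norm_sub_rev]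
    have := norm_cexp_neg_mul_sub_le (w := 1) ht.le hs hc
    rw [neg_one_mul] at this
    linarith
  have hrest : ‖Complex.exp (-s * t) * ((t⁻¹ - (1 - Real.exp (-t))⁻¹ : ℝ) : ℂ)‖
      ≤ Real.exp (-c * t) * 1 := by
    rw [norm_mul, Complex.norm_real, Real.norm_eq_abs]
    gcongr
    exacts [norm_cexp_neg_mul_le ht.le hs, abs_inv_sub_inv_one_sub_exp_neg_le_one ht]
  rw [gaussIntegrand_eq_div_add_mul]
  linarith [norm_add_le_of_le hdiff hrest]

theorem norm_malmstenIntegrand_le (ht : 0 < t) (hc : c ≤ 1) (hs : c ≤ s.re) :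
    ‖malmstenIntegrand s t‖ ≤ (‖s - 1‖ + 1) * Real.exp (-c * t) * ‖s - 1‖ := by
  have hconvex : Convex ℝ ({z : ℂ | c ≤ z.re} ∩ Metric.closedBall 1 ‖s - 1‖) :=
    (convex_halfSpace_re_ge c).inter (convex_closedBall _ _)
  have hderiv : ∀ z ∈ {z : ℂ | c ≤ z.re} ∩ Metric.closedBall 1 ‖s - 1‖,
      ‖gaussIntegrand z t‖ ≤ (‖s - 1‖ + 1) * Real.exp (-c * t) := by
    rintro z ⟨hz, hball⟩
    refine (norm_gaussIntegrand_le ht hc hz).trans ?_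
    gcongr
    exact mem_closedBall_iff_norm.1 hball
  have hmvt := hconvex.norm_image_sub_le_of_norm_hasDerivWithin_le
    (fun z _ => (hasDerivAt_malmstenIntegrand z ht.ne').hasDerivWithinAt) hderiv
    ⟨hc, Metric.mem_closedBall_self (norm_nonneg _)⟩ ⟨hs, mem_closedBall_iff_norm.2 le_rfl⟩
  rwa [malmstenIntegrand_one, sub_zero] at hmvt

theorem integrableOn_malmstenIntegrand (hs : 0 < s.re) :
    IntegrableOn (malmstenIntegrand s) (Ioi 0) := by
  refine Integrable.mono' (((exp_neg_integrableOn_Ioi 0 (lt_min one_pos hs)).const_mul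
    (‖s - 1‖ + 1)).mul_const ‖s - 1‖) (by fun_prop) ?_
  exact ae_restrict_of_forall_mem measurableSet_Ioi fun t ht =>
    norm_malmstenIntegrand_le ht (min_le_left _ _) (min_le_right _ _)

theorem hasDerivAt_integral_malmstenIntegrand (hs : 0 < s.re) :
    HasDerivAt (fun z => ∫ t in Ioi (0 : ℝ), malmstenIntegrand z t)
      (∫ t in Ioi (0 : ℝ), gaussIntegrand s t) s := by
  have hc : 0 < min 1 (s.re / 2) := lt_min one_pos (half_pos hs)
  have hnhds : {z : ℂ | s.re / 2 < z.re} ∩ Metric.ball 1 (‖s - 1‖ + 1) ∈ 𝓝 s :=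
    inter_mem
      ((Complex.isOpen_re_gt _).mem_nhds (half_lt_self hs))
      (Metric.isOpen_ball.mem_nhds (mem_ball_iff_norm.2 (lt_add_one _)))
  refine (hasDerivAt_integral_of_dominated_loc_of_deriv_le hnhds
    (.of_forall fun z => by fun_prop) (integrableOn_malmstenIntegrand hs) (by fun_prop)
    (ae_restrict_of_forall_mem measurableSet_Ioi ?_)
    ((exp_neg_integrableOn_Ioi 0 hc).const_mul (‖s - 1‖ + 1 + 1))
    (ae_restrict_of_forall_mem measurableSet_Ioi fun t ht z _ =>
      hasDerivAt_malmstenIntegrand z (ne_of_gt ht))).2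
  rintro t ht z ⟨hz, hball⟩
  refine (norm_gaussIntegrand_le ht (min_le_left _ _)
    ((min_le_right _ _).trans (le_of_lt hz))).trans ?_
  gcongr
  exact (mem_ball_iff_norm.1 hball).le

theorem differentiableOn_integral_malmstenIntegrand :
    DifferentiableOn ℂ (fun s => ∫ t in Ioi (0 : ℝ), malmstenIntegrand s t) {z | 0 < z.re} :=
  fun _ hs =>
    (hasDerivAt_integral_malmstenIntegrand hs).differentiableAt.differentiableWithinAt

end Holomorphy

section BohrMollerup

/-- The real-valued form of `malmstenIntegrand` at a real point `x`. -/
noncomputable def realMalmstenIntegrand (x t : ℝ) : ℝ :=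
  ((x - 1) * Real.exp (-t) -
    (Real.exp (-t) - Real.exp (-x * t)) / (1 - Real.exp (-t))) / t

variable {x t : ℝ}

theorem malmstenIntegrand_ofReal (x t : ℝ) :
    malmstenIntegrand x t = (realMalmstenIntegrand x t : ℂ) := by
  simp [malmstenIntegrand, realMalmstenIntegrand]

theorem integrableOn_realMalmstenIntegrand (hx : 0 < x) :
    IntegrableOn (realMalmstenIntegrand x) (Ioi 0) := by
  refine (integrableOn_malmstenIntegrand (s := x) hx).re.congr (.of_forall fun t => ?_)
  simp only [malmstenIntegrand_ofReal, RCLike.re_to_complex, Complex.ofReal_re]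

theorem realMalmstenIntegrand_add_one_sub (x : ℝ) (ht : 0 < t) :
    realMalmstenIntegrand (x + 1) t - realMalmstenIntegrand x t =
      (Real.exp (-1 * t) - Real.exp (-x * t)) / t := by
  have hexp : Real.exp (-(x + 1) * t) = Real.exp (-x * t) * Real.exp (-t) := by
    rw [← Real.exp_add]
    ring_nf
  have hne := (one_sub_exp_neg_pos ht).ne'
  rw [realMalmstenIntegrand, realMalmstenIntegrand, hexp, neg_one_mul]
  field_simp
  ring

theorem integral_realMalmstenIntegrand_add_one (hx : 0 < x) :
    ∫ t in Ioi (0 : ℝ), realMalmstenIntegrand (x + 1) t =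
      Real.log x + ∫ t in Ioi (0 : ℝ), realMalmstenIntegrand x t := by
  rw [← sub_eq_iff_eq_add, ← integral_sub (integrableOn_realMalmstenIntegrand (by positivity))
    (integrableOn_realMalmstenIntegrand hx), setIntegral_congr_fun measurableSet_Ioi
    fun t ht => realMalmstenIntegrand_add_one_sub x ht, integral_exp_neg_mul_sub_div one_pos hx,
    div_one]

theorem convexOn_realMalmstenIntegrand (ht : 0 < t) :
    ConvexOn ℝ univ (realMalmstenIntegrand · t) := by
  have hpos := one_sub_exp_neg_pos ht
  have hlin : ConvexOn ℝ univ fun x : ℝ => x * (Real.exp (-t) / t) :=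
    (LinearMap.mulRight ℝ (Real.exp (-t) / t)).convexOn convex_univ
  have hexp : ConvexOn ℝ univ fun x : ℝ => Real.exp (x * -t) :=
    convexOn_exp.comp_linearMap (LinearMap.mulRight ℝ (-t))
  have hweight : 0 ≤ ((1 - Real.exp (-t)) * t)⁻¹ := by positivity
  refine ((hlin.add (hexp.smul hweight)).add_const
    (-(Real.exp (-t) + Real.exp (-t) / (1 - Real.exp (-t))) / t)).congr fun x _ => ?_
  simp only [realMalmstenIntegrand, Pi.add_apply, smul_eq_mul, neg_mul_comm]
  field_simp
  ring

theorem convexOn_integral_realMalmstenIntegrand :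
    ConvexOn ℝ (Ioi 0) fun x => ∫ t in Ioi (0 : ℝ), realMalmstenIntegrand x t :=
  convexOn_integral (convex_Ioi 0)
    (ae_restrict_of_forall_mem measurableSet_Ioi fun _ ht =>
      (convexOn_realMalmstenIntegrand ht).subset (subset_univ _) (convex_Ioi 0))
    fun _ hx => integrableOn_realMalmstenIntegrand hx

theorem integral_realMalmstenIntegrand (hx : 0 < x) :
    ∫ t in Ioi (0 : ℝ), realMalmstenIntegrand x t = Real.log (Real.Gamma x) := by
  have hGamma : EqOn (fun y => Real.exp (∫ t in Ioi (0 : ℝ), realMalmstenIntegrand y t))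
      Real.Gamma (Ioi 0) := by
    refine Real.eq_Gamma_of_log_convex ?_ (fun hy => ?_) (fun _ => Real.exp_pos _) ?_
    · simpa only [Function.comp_def, Real.log_exp] using convexOn_integral_realMalmstenIntegrand
    · rw [integral_realMalmstenIntegrand_add_one hy, Real.exp_add, Real.exp_log hy]
    · simp [realMalmstenIntegrand]
  rw [← hGamma hx, Real.log_exp]

theorem integral_malmstenIntegrand_ofReal (hx : 0 < x) :
    ∫ t in Ioi (0 : ℝ), malmstenIntegrand x t = Real.log (Real.Gamma x) := by
  simp only [malmstenIntegrand_ofReal]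
  rw [integral_complex_ofReal, integral_realMalmstenIntegrand hx]

end BohrMollerup

/-- Malmsten/Binet: any holomorphic logarithm of `Γ` on the right half-plane that is
real on the positive reals is given by Malmsten's integral. -/
theorem malmsten_binet_formula (f : ℂ → ℂ)
    (hf : DifferentiableOn ℂ f {z | 0 < z.re})
    (hexp : ∀ z : ℂ, 0 < z.re → Complex.exp (f z) = Complex.Gamma z)
    (hreal : ∀ x : ℝ, 0 < x → (f x).im = 0) :
    ∀ s : ℂ, 0 < s.re →
      f s = ∫ t in Set.Ioi (0 : ℝ),
        ((s - 1) * Complex.exp (-t) -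
          (Complex.exp (-t) - Complex.exp (-s * t)) / (1 - Complex.exp (-t))) / t := by
  have hpos : ∀ x : ℝ, 0 < x → f x = ∫ t in Ioi (0 : ℝ), malmstenIntegrand x t := by
    intro x hx
    rw [integral_malmstenIntegrand_ofReal hx]
    exact eq_ofReal_log_of_cexp_eq (hreal x hx) ((hexp x hx).trans (Complex.Gamma_ofReal x))
  exact fun _ hs =>
    eqOn_re_pos_of_forall_ofReal hf differentiableOn_integral_malmstenIntegrand hpos hs
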